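/- arXiv:1008.2228 — 2 statements merged into one kernel-verified Lean document; each statement's English description precedes it below -/
import Mathlib

section
/- For all g, h ∈ {0,1,…,d} with g ≤ h, the adjacency matrices of the wreath product satisfy A_g (A_0 + A_1 + ⋯ + A_h) = k_g (A_0 + A_1 + ⋯ + A_h). -/
open Finset Matrix

/-- Vertex set of the wreath product `K_{n 0} ≀ K_{n 1} ≀ ⋯ ≀ K_{n (d-1)}`
(paper indices `n_1, …, n_d` correspond to `n 0, …, n (d-1)`). -/
abbrev Vx (d : ℕ) (n : ℕ → ℕ) : Type := (i : Fin d) → Fin (n i)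

/-- `delta x y = 0` if `x = y`; otherwise `delta x y` is the largest (1-based)
index at which `x` and `y` differ. -/
def delta {d : ℕ} {n : ℕ → ℕ} (x y : Vx d n) : ℕ :=
  (Finset.univ.filter fun i => x i ≠ y i).sup fun i => (i : ℕ) + 1

/-- The `i`-th adjacency matrix of the wreath product: `(A i) x y = 1` iff `delta x y = i`. -/
noncomputable def A (d : ℕ) (n : ℕ → ℕ) (i : ℕ) : Matrix (Vx d n) (Vx d n) ℂ :=
  Matrix.of fun x y => if delta x y = i then 1 else 0

/-- The valencies: `k 0 = 1` and, for `1 ≤ i`, `k i = n_1 ⋯ n_{i-1} (n_i - 1)`,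
i.e. `k i = n 0 ⋯ n (i-2) * (n (i-1) - 1)`. -/
def k (n : ℕ → ℕ) (i : ℕ) : ℕ :=
  if i = 0 then 1 else (∏ j ∈ Finset.range (i - 1), n j) * (n (i - 1) - 1)

/-- The dual idempotent `E_i*` with respect to the base point `x₀`: the diagonal
0-1 matrix with `(E_i*)_{yy} = 1` iff `delta x₀ y = i`. -/
noncomputable def Es {d : ℕ} {n : ℕ → ℕ} (x₀ : Vx d n) (i : ℕ) :
    Matrix (Vx d n) (Vx d n) ℂ :=
  Matrix.of fun y z => if y = z ∧ delta x₀ y = i then 1 else 0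

/-- The all-ones matrix `J`. -/
noncomputable def Jm (d : ℕ) (n : ℕ → ℕ) : Matrix (Vx d n) (Vx d n) ℂ :=
  Matrix.of fun _ _ => 1

/-- The matrices `G i j`. -/
noncomputable def G {d : ℕ} {n : ℕ → ℕ} (x₀ : Vx d n) (i j : ℕ) :
    Matrix (Vx d n) (Vx d n) ℂ :=
  if i < j then ((k n j : ℂ))⁻¹ • (Es x₀ i * A d n j * Es x₀ j)
  else if j < i then ((k n j : ℂ))⁻¹ • (Es x₀ i * A d n i * Es x₀ j)
  else ((k n i : ℂ))⁻¹ • (Es x₀ i * Jm d n * Es x₀ i)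

/-- The span `U` of the matrices `G i j`, `i, j ∈ [d]`. -/
noncomputable def Uspan {d : ℕ} {n : ℕ → ℕ} (x₀ : Vx d n) :
    Submodule ℂ (Matrix (Vx d n) (Vx d n) ℂ) :=
  Submodule.span ℂ (Set.range fun p : Fin (d + 1) × Fin (d + 1) => G x₀ p.1 p.2)

/-- The Terwilliger algebra of the wreath product with respect to `x₀`. -/
noncomputable def Ter {d : ℕ} {n : ℕ → ℕ} (x₀ : Vx d n) :
    Subalgebra ℂ (Matrix (Vx d n) (Vx d n) ℂ) :=
  Algebra.adjoin ℂ
    ((Set.range fun i : Fin (d + 1) => A d n i) ∪ (Set.range fun i : Fin (d + 1) => Es x₀ i))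

/-- The matrices `F i h`, for `1 ≤ i ≤ d` and `0 ≤ h ≤ i - 1`. -/
noncomputable def F {d : ℕ} {n : ℕ → ℕ} (x₀ : Vx d n) (i h : ℕ) :
    Matrix (Vx d n) (Vx d n) ℂ :=
  if h < i - 1 then
    (∑ j ∈ Finset.range (h + 1), (k n j : ℂ))⁻¹ •
        (∑ j ∈ Finset.range (h + 1), Es x₀ i * A d n j * Es x₀ i)
      - (∑ j ∈ Finset.range (h + 2), (k n j : ℂ))⁻¹ •
          (∑ j ∈ Finset.range (h + 2), Es x₀ i * A d n j * Es x₀ i)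
  else
    (∑ j ∈ Finset.range i, (k n j : ℂ))⁻¹ •
        (∑ j ∈ Finset.range i, Es x₀ i * A d n j * Es x₀ i)
      - G x₀ i i

theorem delta_le_iff {d : ℕ} {n : ℕ → ℕ} (x y : Vx d n) (m : ℕ) :
    delta x y ≤ m ↔ ∀ i : Fin d, m ≤ (i : ℕ) → x i = y i := by
  unfold delta
  rw [Finset.sup_le_iff]
  constructor
  · intro H i hi
    by_contra hne
    have := H i (by simpa using hne)
    omega
  · intro H i hi
    simp only [Finset.mem_filter, Finset.mem_univ, true_and] at hi
    by_contra hlt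
    exact hi (H i (by omega))

theorem card_delta_le {d : ℕ} {n : ℕ → ℕ} (x : Vx d n) (m : ℕ) (hm : m ≤ d) :
    (Finset.univ.filter fun y => delta x y ≤ m).card = ∏ j ∈ Finset.range m, n j := by
  have h1 : (Finset.univ.filter fun y => delta x y ≤ m) =
      Fintype.piFinset (fun i : Fin d => if (i : ℕ) < m then Finset.univ else {x i}) := by
    ext y
    simp only [Finset.mem_filter, Finset.mem_univ, true_and, Fintype.mem_piFinset, delta_le_iff]
    refine forall_congr' fun i => ?_
    by_cases hi : (i : ℕ) < m
    · simp [hi]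
    · simp [hi, not_lt.mp hi, eq_comm]
  rw [h1, Fintype.card_piFinset]
  have h2 : ∀ i : Fin d, (if (i : ℕ) < m then Finset.univ else {x i} : Finset (Fin (n i))).card
      = (fun j : ℕ => if j < m then n j else 1) i := by
    intro i
    by_cases hi : (i : ℕ) < m <;> simp [hi]
  rw [Finset.prod_congr rfl fun i _ => h2 i,
    Fin.prod_univ_eq_prod_range (fun j : ℕ => if j < m then n j else 1) d,
    ← Finset.prod_subset (Finset.range_subset_range.mpr hm)]
  · exact Finset.prod_congr rfl fun j hj => by simp [Finset.mem_range.mp hj]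
  · intro j _ hj
    simp only [Finset.mem_range] at hj
    simp [hj]

theorem card_delta_eq {d : ℕ} {n : ℕ → ℕ} (x : Vx d n) (g : ℕ) (hg : g ≤ d) :
    (Finset.univ.filter fun y => delta x y = g).card = k n g := by
  rcases g with _ | m
  · have := card_delta_le x 0 hg
    simpa [k] using this
  · have h1 := card_delta_le x (m + 1) hg
    have h2 := card_delta_le x m (by omega)
    have h3 : (Finset.univ.filter fun y => delta x y ≤ m + 1) =
        (Finset.univ.filter fun y => delta x y ≤ m) ∪
          (Finset.univ.filter fun y => delta x y = m + 1) := by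
      ext y
      simp only [Finset.mem_filter, Finset.mem_univ, true_and, Finset.mem_union]
      omega
    rw [h3, Finset.card_union_of_disjoint, h2, Finset.prod_range_succ] at h1
    · simp only [k, Nat.add_sub_cancel, Nat.mul_sub, mul_one]
      simp only [Nat.add_eq_zero_iff, one_ne_zero, and_false, if_false]
      omega
    · rw [Finset.disjoint_filter]
      intro y _ h
      omega

theorem sumA_apply (d : ℕ) (n : ℕ → ℕ) (h : ℕ) (x y : Vx d n) :
    (∑ i ∈ Finset.range (h + 1), A d n i) x y = if delta x y ≤ h then 1 else 0 := by
  simp [Matrix.sum_apply, A, Nat.lt_succ_iff]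

/-- `A g (A 0 + ⋯ + A h) = k g (A 0 + ⋯ + A h)` for `g ≤ h ≤ d`. -/
theorem stmt9 (d : ℕ) (hd : 1 ≤ d) (n : ℕ → ℕ) (hn : ∀ i < d, 2 ≤ n i)
    (g h : ℕ) (hgh : g ≤ h) (hh : h ≤ d) :
    A d n g * (∑ i ∈ Finset.range (h + 1), A d n i)
      = (k n g : ℂ) • (∑ i ∈ Finset.range (h + 1), A d n i) := by
  ext x y
  rw [Matrix.mul_apply, Matrix.smul_apply, sumA_apply, ← card_delta_eq x g (hgh.trans hh),
    Finset.card_filter, Nat.cast_sum, smul_eq_mul, Finset.sum_mul]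
  refine Finset.sum_congr rfl fun z _ => ?_
  rw [sumA_apply]
  by_cases hz : delta x z = g
  · have hxz := (delta_le_iff x z h).mp (hz.trans_le hgh)
    have : delta z y ≤ h ↔ delta x y ≤ h := by
      rw [delta_le_iff, delta_le_iff]
      exact forall₂_congr fun i hi => by rw [hxz i hi]
    simp [A, hz, this]
  · simp [A, hz]
end

section
/- For all i, j ∈ {0,1,…,d} with i < j: E_i* A_j E_j* = E_i* A_j, E_j* A_j E_i* = A_j E_i*, and E_j* A_i E_j* = A_i E_j*. -/
open Finset Matrix

theorem delta_comm' {d : ℕ} {n : ℕ → ℕ} (x y : Vx d n) : delta x y = delta y x := by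
  simp only [delta, ne_comm]

theorem delta_tri {d : ℕ} {n : ℕ → ℕ} (x y z : Vx d n) :
    delta x z ≤ max (delta x y) (delta y z) := by
  have key : ∀ (u v : Vx d n) (i : Fin d), u i ≠ v i → (i : ℕ) + 1 ≤ delta u v := by
    intro u v i h
    exact Finset.le_sup (f := fun i : Fin d => (i : ℕ) + 1)
      (Finset.mem_filter.mpr ⟨Finset.mem_univ i, h⟩)
  refine Finset.sup_le fun i hi => ?_
  have h := (Finset.mem_filter.mp hi).2
  by_cases hxy : x i = y i
  · exact le_max_of_le_right (key y z i (fun e => h (hxy.trans e)))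
  · exact le_max_of_le_left (key x y i hxy)

theorem Es_diag {d : ℕ} {n : ℕ → ℕ} (x₀ : Vx d n) (i : ℕ) :
    Es x₀ i = Matrix.diagonal fun y => if delta x₀ y = i then (1 : ℂ) else 0 := by
  ext y z
  by_cases h : y = z <;> simp [Es, h]

/-- for `i < j ≤ d`: `E_i* A_j E_j* = E_i* A_j`, `E_j* A_j E_i* = A_j E_i*`,
and `E_j* A_i E_j* = A_i E_j*`. -/
theorem stmt13 (d : ℕ) (hd : 1 ≤ d) (n : ℕ → ℕ) (hn : ∀ i < d, 2 ≤ n i)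
    (x₀ : Vx d n) (i j : ℕ) (hij : i < j) (hj : j ≤ d) :
    Es x₀ i * A d n j * Es x₀ j = Es x₀ i * A d n j ∧
    Es x₀ j * A d n j * Es x₀ i = A d n j * Es x₀ i ∧
    Es x₀ j * A d n i * Es x₀ j = A d n i * Es x₀ j := by
  simp only [Es_diag]
  refine ⟨?_, ?_, ?_⟩ <;> ext y z <;>
    simp only [Matrix.mul_diagonal, Matrix.diagonal_mul, A, Matrix.of_apply] <;>
    have h1 := delta_tri x₀ y z <;> have h2 := delta_tri x₀ z y <;>
    have h3 := delta_tri y x₀ z <;>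
    rw [delta_comm' z y] at h2 <;> rw [delta_comm' y x₀] at h3 <;>
    split_ifs <;> first | (simp; done) | (exfalso; omega)
end
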